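/- arXiv:2602.04888 — 4 statements merged into one kernel-verified Lean document; each statement's English description precedes it below -/
import Mathlib

section
/- Let G be a finite simple graph with vertex set V, let w be a nonnegative weight function on the edges of G, let B ⊆ V be a distinguished set of boundary vertices, and let W⋆ ⊆ V. Then the following are equivalent: (1) for every W ⊆ V with W ∩ B = W⋆ ∩ B one has |C(W⋆)| ≤ |C(W)|; (2) for every W ⊆ V with W ∩ B = W⋆ ∩ B and every connected component R of the subgraph of G induced on the symmetric difference W Δ W⋆, the total weight of the edges of ∂R that lie in C(W⋆) is at most the total weight of the edges of ∂R that lie in C(W). (This is the combinatorial content of the paper's local–global compatibility theorem: a distinguished cut is globally weight-minimizing among homologous cuts if and only if the polygon inequalities hold on every connected region of disagreement.) -/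
open scoped Classical symmDiff

/-- The cut of a vertex set `W`: the edges of `G` with exactly one endpoint in `W`. -/
def graphCut {V : Type*} (G : SimpleGraph V) (W : Set V) : Set (Sym2 V) :=
  {e | e ∈ G.edgeSet ∧ ∃ a b, e = s(a, b) ∧ a ∈ W ∧ b ∉ W}

/-- The total weight of a set of edges. -/
noncomputable def edgeWeight {V : Type*} [Fintype V] [DecidableEq V]
    (w : Sym2 V → ℝ) (S : Set (Sym2 V)) : ℝ :=
  ∑ e : Sym2 V, S.indicator w e

/-- `R` is (the vertex set of) a connected component of the subgraph of `G`
induced on `D`. -/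
def IsCompOf {V : Type*} (G : SimpleGraph V) (D R : Set V) : Prop :=
  ∃ c : (SimpleGraph.induce D G).ConnectedComponent, R = Subtype.val '' c.supp

/-! Taking cuts turns symmetric differences of vertex sets into symmetric differences of edge sets.
Switching `W⋆` along `R` therefore exchanges `∂R ∩ C(W⋆)` for `∂R \ C(W⋆)` and keeps the rest of the
cut, so `W⋆ ∆ R` is at least as heavy as `W⋆` exactly when the polygon inequality holds on `∂R`.
When `R` is a component of `W ∆ W⋆`, every edge of `∂R` lies in exactly one of `C(W)` and `C(W⋆)`,
so `∂R \ C(W⋆) = ∂R ∩ C(W)`. Finally, `∂(W ∆ W⋆)` is the disjoint union of the boundaries of the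
components, so the inequalities on the components add up to the inequality for `W`. -/

theorem symmDiff_inter_eq_of_subset_symmDiff {α : Type*} {U W R B : Set α}
    (hW : W ∩ B = U ∩ B) (hR : R ⊆ W ∆ U) : (U ∆ R) ∩ B = U ∩ B := by
  have hdisj : R ∩ B = ∅ := by
    rw [← Set.subset_empty_iff]
    calc R ∩ B ⊆ W ∆ U ∩ B := Set.inter_subset_inter_left B hR
      _ = ∅ := by rw [Set.inter_symmDiff_distrib_right, hW, symmDiff_self, Set.bot_eq_empty]
  rw [Set.inter_symmDiff_distrib_right, hdisj, ← Set.bot_eq_empty, symmDiff_bot]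

section Cuts

variable {V : Type*} {G : SimpleGraph V}

theorem mk_mem_graphCut_iff {W : Set V} {a b : V} :
    s(a, b) ∈ graphCut G W ↔ G.Adj a b ∧ Xor (a ∈ W) (b ∈ W) := by
  refine and_congr_right fun _ => ⟨?_, ?_⟩
  · rintro ⟨x, y, hxy, hx, hy⟩
    rcases Sym2.eq_iff.1 hxy with ⟨rfl, rfl⟩ | ⟨rfl, rfl⟩
    exacts [.inl ⟨hx, hy⟩, .inr ⟨hx, hy⟩]
  · rintro (⟨ha, hb⟩ | ⟨hb, ha⟩)
    exacts [⟨a, b, rfl, ha, hb⟩, ⟨b, a, Sym2.eq_swap, hb, ha⟩]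

theorem graphCut_subset_edgeSet (W : Set V) : graphCut G W ⊆ G.edgeSet :=
  fun _ he => he.1

theorem graphCut_symmDiff (U W : Set V) :
    graphCut G (U ∆ W) = graphCut G U ∆ graphCut G W := by
  ext ⟨a, b⟩
  simp only [Set.mem_symmDiff, mk_mem_graphCut_iff, Xor]
  tauto

end Cuts

section Components

open scoped Function

variable {V : Type*} {G : SimpleGraph V} {D R : Set V}

namespace IsCompOf

theorem subset (hR : IsCompOf G D R) : R ⊆ D := by
  obtain ⟨c, rfl⟩ := hR
  exact Subtype.coe_image_subset D c.supp

theorem mem_of_adj (hR : IsCompOf G D R) {a b : V} (hab : G.Adj a b) (ha : a ∈ R) (hb : b ∈ D) :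
    b ∈ R := by
  obtain ⟨c, rfl⟩ := hR
  obtain ⟨x, hx, rfl⟩ := ha
  have hxb : (SimpleGraph.induce D G).Adj x ⟨b, hb⟩ := hab
  exact ⟨⟨b, hb⟩, c.mem_supp_of_adj_mem_supp hx hxb, rfl⟩

theorem graphCut_subset (hR : IsCompOf G D R) : graphCut G R ⊆ graphCut G D := by
  rintro _ ⟨hab, a, b, rfl, ha, hb⟩
  exact ⟨hab, a, b, rfl, hR.subset ha, fun hbD => hb (hR.mem_of_adj hab ha hbD)⟩

theorem graphCut_sdiff_eq_inter {U W : Set V} (hR : IsCompOf G (W ∆ U) R) :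
    graphCut G R \ graphCut G U = graphCut G R ∩ graphCut G W := by
  have hsub : graphCut G R ⊆ graphCut G W ∆ graphCut G U :=
    graphCut_symmDiff W U ▸ hR.graphCut_subset
  ext e
  have he := @hsub e
  simp only [Set.mem_symmDiff] at he
  simp only [Set.mem_sdiff, Set.mem_inter_iff]
  tauto

end IsCompOf

theorem mk_mem_graphCut_supp_iff {c : (SimpleGraph.induce D G).ConnectedComponent} {a b : V}
    (hab : G.Adj a b) (ha : a ∈ D) (hb : b ∉ D) :
    s(a, b) ∈ graphCut G (Subtype.val '' c.supp) ↔
      (SimpleGraph.induce D G).connectedComponentMk ⟨a, ha⟩ = c := by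
  simp [mk_mem_graphCut_iff, Xor, hab, ha, hb]

variable (G D)

theorem graphCut_eq_iUnion_components :
    graphCut G D = ⋃ c : (SimpleGraph.induce D G).ConnectedComponent,
      graphCut G (Subtype.val '' c.supp) := by
  refine subset_antisymm ?_ (Set.iUnion_subset fun c => IsCompOf.graphCut_subset ⟨c, rfl⟩)
  rintro _ ⟨hab, a, b, rfl, ha, hb⟩
  exact Set.mem_iUnion.2 ⟨_, (mk_mem_graphCut_supp_iff hab ha hb).2 rfl⟩

theorem pairwise_disjoint_graphCut_components :
    Pairwise (Disjoint on
      fun c : (SimpleGraph.induce D G).ConnectedComponent =>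
        graphCut G (Subtype.val '' c.supp)) := by
  intro c c' hne
  refine Set.disjoint_left.2 fun e hc hc' => hne ?_
  obtain ⟨hab, a, b, rfl, ha, hb⟩ := IsCompOf.graphCut_subset ⟨c, rfl⟩ hc
  exact ((mk_mem_graphCut_supp_iff hab ha hb).1 hc).symm.trans
    ((mk_mem_graphCut_supp_iff hab ha hb).1 hc')

end Components

section Sums

open scoped Function

variable {α M : Type*} [AddCommGroup M] [UniformSpace M] [IsUniformAddGroup M] [CompleteSpace M]
  {f : α → M}

theorem summable_subtype_of_subset {s t : Set α} (hst : s ⊆ t) (hf : Summable fun x : t => f x) :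
    Summable fun x : s => f x :=
  hf.comp_injective (Set.inclusion_injective hst)

theorem tsum_eq_tsum_inter_add_tsum_sdiff [T2Space M] {s : Set α} (t : Set α)
    (hf : Summable fun x : s => f x) :
    ∑' x : s, f x = ∑' x : ↥(s ∩ t), f x + ∑' x : ↥(s \ t), f x := by
  rw [← Summable.tsum_union_disjoint Set.disjoint_sdiff_inter.symm
    (summable_subtype_of_subset Set.inter_subset_left hf)
    (summable_subtype_of_subset Set.sdiff_subset hf), Set.inter_union_sdiff]

theorem summable_tsum_of_iUnion {ι : Type*} {s : ι → Set α}
    (hs : Pairwise (Disjoint on s)) (hf : Summable fun x : ↥(⋃ i, s i) => f x) :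
    Summable fun i => ∑' x : s i, f x :=
  ((Set.unionEqSigmaOfDisjoint hs).symm.summable_iff.2 hf).sigma

theorem tsum_iUnion_eq_tsum_tsum [T2Space M] {ι : Type*} {s : ι → Set α}
    (hs : Pairwise (Disjoint on s)) (hf : Summable fun x : ↥(⋃ i, s i) => f x) :
    ∑' x : ↥(⋃ i, s i), f x = ∑' i, ∑' x : s i, f x :=
  let e := (Set.unionEqSigmaOfDisjoint hs).symm
  (e.tsum_eq _).symm.trans (e.summable_iff.2 hf).tsum_sigma

variable [PartialOrder M] [IsOrderedAddMonoid M] [OrderClosedTopology M]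

theorem tsum_le_tsum_symmDiff_iff {s t : Set α} (hf : Summable fun x : ↥(s ∪ t) => f x) :
    ∑' x : s, f x ≤ ∑' x : ↥(s ∆ t), f x ↔
      ∑' x : ↥(t ∩ s), f x ≤ ∑' x : ↥(t \ s), f x := by
  have hs : Summable fun x : s => f x := summable_subtype_of_subset Set.subset_union_left hf
  have hst : Summable fun x : ↥(s ∆ t) => f x :=
    summable_subtype_of_subset symmDiff_le_sup hf
  have hinter : s ∆ t ∩ t = t \ s := by
    rw [Set.inter_symmDiff_distrib_right, Set.inter_self, symmDiff_of_le Set.inter_subset_right,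
      Set.sdiff_inter_self_eq_sdiff]
  rw [tsum_eq_tsum_inter_add_tsum_sdiff t hs, tsum_eq_tsum_inter_add_tsum_sdiff t hst,
    hinter, show s ∆ t \ t = s \ t from symmDiff_sdiff_right s t, Set.inter_comm s t,
    add_le_add_iff_right]

theorem tsum_iUnion_le_tsum_iUnion {ι : Type*} {s t : ι → Set α}
    (hs : Pairwise (Disjoint on s)) (ht : Pairwise (Disjoint on t))
    (hfs : Summable fun x : ↥(⋃ i, s i) => f x) (hft : Summable fun x : ↥(⋃ i, t i) => f x)
    (hle : ∀ i, ∑' x : s i, f x ≤ ∑' x : t i, f x) :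
    ∑' x : ↥(⋃ i, s i), f x ≤ ∑' x : ↥(⋃ i, t i), f x := by
  rw [tsum_iUnion_eq_tsum_tsum hs hfs, tsum_iUnion_eq_tsum_tsum ht hft]
  exact (summable_tsum_of_iUnion hs hfs).tsum_le_tsum hle (summable_tsum_of_iUnion ht hft)

end Sums

section Minimality

variable {V M : Type*} [AddCommGroup M] [PartialOrder M] [IsOrderedAddMonoid M] [UniformSpace M]
  [IsUniformAddGroup M] [CompleteSpace M] [OrderClosedTopology M]
  {G : SimpleGraph V} {w : Sym2 V → M}

theorem tsum_graphCut_le_tsum_graphCut_symmDiff_iff (hw : Summable fun e : G.edgeSet => w e)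
    (U R : Set V) :
    ∑' e : graphCut G U, w e ≤ ∑' e : graphCut G (U ∆ R), w e ↔
      ∑' e : ↥(graphCut G R ∩ graphCut G U), w e ≤
        ∑' e : ↥(graphCut G R \ graphCut G U), w e := by
  rw [graphCut_symmDiff]
  exact tsum_le_tsum_symmDiff_iff <| summable_subtype_of_subset
    (Set.union_subset (graphCut_subset_edgeSet U) (graphCut_subset_edgeSet R)) hw

theorem tsum_graphCut_inter_le_tsum_graphCut_sdiff (hw : Summable fun e : G.edgeSet => w e)
    {D : Set V} {S : Set (Sym2 V)}
    (hle : ∀ R, IsCompOf G D R →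
      ∑' e : ↥(graphCut G R ∩ S), w e ≤ ∑' e : ↥(graphCut G R \ S), w e) :
    ∑' e : ↥(graphCut G D ∩ S), w e ≤ ∑' e : ↥(graphCut G D \ S), w e := by
  have hdisj := pairwise_disjoint_graphCut_components G D
  have hwD : Summable fun e : graphCut G D => w e :=
    summable_subtype_of_subset (graphCut_subset_edgeSet D) hw
  have hwInter := summable_subtype_of_subset (Set.inter_subset_left (t := S)) hwD
  have hwSdiff := summable_subtype_of_subset (Set.sdiff_subset (t := S)) hwD
  rw [graphCut_eq_iUnion_components G D, Set.iUnion_inter] at hwInter ⊢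
  rw [graphCut_eq_iUnion_components G D, Set.iUnion_sdiff] at hwSdiff
  rw [Set.iUnion_sdiff]
  exact tsum_iUnion_le_tsum_iUnion
    (hdisj.mono fun _ _ h => h.mono Set.inter_subset_left Set.inter_subset_left)
    (hdisj.mono fun _ _ h => h.mono Set.sdiff_subset Set.sdiff_subset)
    hwInter hwSdiff fun c => hle _ ⟨c, rfl⟩

theorem local_global_compatibility_general (hw : Summable fun e : G.edgeSet => w e)
    (B Wstar : Set V) :
    (∀ W : Set V, W ∩ B = Wstar ∩ B →
        ∑' e : graphCut G Wstar, w e ≤ ∑' e : graphCut G W, w e) ↔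
    (∀ W : Set V, W ∩ B = Wstar ∩ B →
        ∀ R : Set V, IsCompOf G (W ∆ Wstar) R →
          ∑' e : ↥(graphCut G R ∩ graphCut G Wstar), w e ≤
            ∑' e : ↥(graphCut G R ∩ graphCut G W), w e) := by
  constructor
  · intro hmin W hW R hR
    rw [← hR.graphCut_sdiff_eq_inter, ← tsum_graphCut_le_tsum_graphCut_symmDiff_iff hw]
    exact hmin _ (symmDiff_inter_eq_of_subset_symmDiff hW hR.subset)
  · intro hcomp W hW
    have hswitch : Wstar ∆ (W ∆ Wstar) = W := by
      rw [symmDiff_comm W, symmDiff_symmDiff_cancel_left]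
    rw [← hswitch, tsum_graphCut_le_tsum_graphCut_symmDiff_iff hw]
    refine tsum_graphCut_inter_le_tsum_graphCut_sdiff hw fun R hR => ?_
    rw [hR.graphCut_sdiff_eq_inter]
    exact hcomp W hW R hR

end Minimality

theorem edgeWeight_eq_tsum {V : Type*} [Fintype V] [DecidableEq V] (w : Sym2 V → ℝ)
    (S : Set (Sym2 V)) : edgeWeight w S = ∑' e : S, w e := by
  rw [tsum_subtype, tsum_fintype, edgeWeight]

/-- **Local–global compatibility.**  A distinguished cut `C(W⋆)` is globally
weight-minimizing among homologous cuts (those `W` with `W ∩ B = W⋆ ∩ B`) iff for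
every homologous `W` and every connected component `R` of the induced subgraph on
`W ∆ W⋆`, the total weight of the edges of `∂R` lying in `C(W⋆)` is at most the
total weight of those lying in `C(W)`. -/
theorem local_global_compatibility {V : Type*} [Fintype V] [DecidableEq V]
    (G : SimpleGraph V) (w : Sym2 V → ℝ) (hw : ∀ e, 0 ≤ w e)
    (B Wstar : Set V) :
    (∀ W : Set V, W ∩ B = Wstar ∩ B →
        edgeWeight w (graphCut G Wstar) ≤ edgeWeight w (graphCut G W)) ↔
    (∀ W : Set V, W ∩ B = Wstar ∩ B →
        ∀ R : Set V, IsCompOf G (W ∆ Wstar) R →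
          edgeWeight w (graphCut G R ∩ graphCut G Wstar) ≤
            edgeWeight w (graphCut G R ∩ graphCut G W)) := by
  simp only [edgeWeight_eq_tsum]
  exact local_global_compatibility_general Summable.of_finite B Wstar
end

section
/- Define A : ℝⁿ → ℝⁿ by A(p) = p / √(1 + |p|²). For any p, q ∈ ℝⁿ, the mean value representation A(q) − A(p) = (∫₀¹ DA(p + t(q − p)) dt) (q − p) holds, where DA denotes the derivative of A; moreover the averaged linear map a := ∫₀¹ DA(p + t(q − p)) dt is positive definite, and satisfies ξᵀ a ξ ≥ |ξ|² / (1 + max(|p|, |q|)²)^{3/2} for all ξ ∈ ℝⁿ. (This is the linearization identity, with uniformly elliptic averaged coefficients, used to reduce comparison principles for the minimal surface operator to the linear maximum principle.) -/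
open Matrix

/-- The map `A(p) = p / √(1 + |p|²)` appearing in the divergence form of the
minimal surface operator (with `|·|` the Euclidean norm on `ℝⁿ`). -/
noncomputable def msoA (n : ℕ) (p : Fin n → ℝ) : Fin n → ℝ :=
  fun i => p i / Real.sqrt (1 + ∑ j, p j ^ 2)

/-- The Jacobian matrix of `msoA`, with entries
`δᵢⱼ / √(1 + |p|²) − pᵢ pⱼ / (1 + |p|²)^{3/2}`. -/
noncomputable def msoDA (n : ℕ) (p : Fin n → ℝ) : Matrix (Fin n) (Fin n) ℝ :=
  fun i j => (if i = j then (1 : ℝ) else 0) / Real.sqrt (1 + ∑ k, p k ^ 2)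
    - p i * p j / (1 + ∑ k, p k ^ 2) ^ ((3 : ℝ) / 2)

/-- The averaged coefficient matrix `a = ∫₀¹ DA(p + t(q − p)) dt`
(defined entrywise). -/
noncomputable def msoAvg (n : ℕ) (p q : Fin n → ℝ) : Matrix (Fin n) (Fin n) ℝ :=
  fun i j => ∫ t in (0 : ℝ)..1, msoDA n (p + t • (q - p)) i j

/-!
By the chain rule and the fundamental theorem of calculus along the segment from `p` to `q`, the
increment of `A` is the averaged Jacobian applied to `q - p`. With `W = √(1 + |x|²)` the Jacobian
has quadratic form `DA(x) ξ · ξ = |ξ|² / W - (x · ξ)² / W³`, which the Cauchy–Schwarz inequality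
bounds below by `|ξ|² / W³`. Averaging preserves positive definiteness and lower bounds of quadratic
forms, and convexity of the norm bounds `W` on the segment by its larger endpoint value.
-/

section SegmentAverage

open MeasureTheory

variable {m n : Type*}

/-- The average `∫₀¹ J(p + t(q - p)) dt` of a matrix field `J` along the segment from `p` to `q`,
taken entrywise because `Matrix` carries no global norm. Entries that are not integrable along the
segment are averaged to the junk value `0`. -/
noncomputable def segmentAverage (J : (n → ℝ) → Matrix m n ℝ) (p q : n → ℝ) : Matrix m n ℝ :=
  of fun i j => ∫ t in (0 : ℝ)..1, J (p + t • (q - p)) i j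

/-- Integrability of the entries of a matrix field `J` along the segment from `p` to `q`, so that
`segmentAverage J p q` is a genuine average. -/
def SegmentIntegrable (J : (n → ℝ) → Matrix m n ℝ) (p q : n → ℝ) : Prop :=
  ∀ i j, IntervalIntegrable (fun t : ℝ => J (p + t • (q - p)) i j) volume 0 1

lemma add_smul_sub_mem_segment {E : Type*} [AddCommGroup E] [Module ℝ E] (p q : E) {t : ℝ}
    (ht : t ∈ Set.Icc (0 : ℝ) 1) : p + t • (q - p) ∈ segment ℝ p q :=
  (convex_segment p q).add_smul_sub_mem (left_mem_segment ℝ p q) (right_mem_segment ℝ p q) ht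

lemma segmentIntegrable_of_continuousOn {J : (n → ℝ) → Matrix m n ℝ} {p q : n → ℝ}
    (hJ : ContinuousOn J (segment ℝ p q)) : SegmentIntegrable J p q := by
  intro i j
  have entry_continuousOn : ContinuousOn (fun x => J x i j) (segment ℝ p q) :=
    (continuous_id.matrix_elem i j).comp_continuousOn hJ
  refine ContinuousOn.intervalIntegrable_of_Icc zero_le_one ?_
  exact entry_continuousOn.comp (by fun_prop) fun t ht => add_smul_sub_mem_segment p q ht

variable [Fintype n] {J : (n → ℝ) → Matrix m n ℝ} {p q : n → ℝ}

namespace SegmentIntegrable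

lemma mulVec (hJ : SegmentIntegrable J p q) (v : n → ℝ) (i : m) :
    IntervalIntegrable (fun t : ℝ => (J (p + t • (q - p)) *ᵥ v) i) volume 0 1 := by
  simp only [Matrix.mulVec, dotProduct, ← Finset.sum_fn]
  exact IntervalIntegrable.sum _ fun j _ => (hJ i j).mul_const (v j)

lemma dotProduct_mulVec [Fintype m] (hJ : SegmentIntegrable J p q) (u : m → ℝ) (v : n → ℝ) :
    IntervalIntegrable (fun t : ℝ => u ⬝ᵥ J (p + t • (q - p)) *ᵥ v) volume 0 1 := by
  simp only [dotProduct, ← Finset.sum_fn]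
  exact IntervalIntegrable.sum _ fun i _ => (hJ.mulVec v i).const_mul (u i)

end SegmentIntegrable

lemma segmentAverage_mulVec_apply (hJ : SegmentIntegrable J p q) (v : n → ℝ) (i : m) :
    (segmentAverage J p q *ᵥ v) i = ∫ t in (0 : ℝ)..1, (J (p + t • (q - p)) *ᵥ v) i := by
  simp only [mulVec, dotProduct, segmentAverage, of_apply]
  rw [intervalIntegral.integral_finsetSum fun j _ => (hJ i j).mul_const (v j)]
  simp only [intervalIntegral.integral_mul_const]

lemma dotProduct_segmentAverage_mulVec [Fintype m] (hJ : SegmentIntegrable J p q)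
    (u : m → ℝ) (v : n → ℝ) :
    u ⬝ᵥ segmentAverage J p q *ᵥ v = ∫ t in (0 : ℝ)..1, u ⬝ᵥ J (p + t • (q - p)) *ᵥ v := by
  simp only [dotProduct, segmentAverage_mulVec_apply hJ]
  rw [intervalIntegral.integral_finsetSum fun i _ => (hJ.mulVec v i).const_mul (u i)]
  simp only [intervalIntegral.integral_const_mul]

lemma le_dotProduct_segmentAverage_mulVec [Fintype m] (hJ : SegmentIntegrable J p q) {c : ℝ}
    {u : m → ℝ} {v : n → ℝ} (hc : ∀ x ∈ segment ℝ p q, c ≤ u ⬝ᵥ J x *ᵥ v) :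
    c ≤ u ⬝ᵥ segmentAverage J p q *ᵥ v := by
  calc c = ∫ _ in (0 : ℝ)..1, c := by simp
    _ ≤ ∫ t in (0 : ℝ)..1, u ⬝ᵥ J (p + t • (q - p)) *ᵥ v :=
      intervalIntegral.integral_mono_on zero_le_one intervalIntegrable_const
        (hJ.dotProduct_mulVec u v) fun t ht => hc _ (add_smul_sub_mem_segment p q ht)
    _ = u ⬝ᵥ segmentAverage J p q *ᵥ v := (dotProduct_segmentAverage_mulVec hJ u v).symm

lemma posDef_segmentAverage {k : Type*} [Finite k] {J : (k → ℝ) → Matrix k k ℝ} {p q : k → ℝ}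
    (hJ : SegmentIntegrable J p q) (hpos : ∀ x ∈ segment ℝ p q, (J x).PosDef) :
    (segmentAverage J p q).PosDef := by
  cases nonempty_fintype k
  refine PosDef.of_dotProduct_mulVec_pos ?_ fun {v} hv => ?_
  · refine IsHermitian.ext fun i j => intervalIntegral.integral_congr fun t ht => ?_
    rw [Set.uIcc_of_le zero_le_one] at ht
    exact (hpos _ (add_smul_sub_mem_segment p q ht)).isHermitian.apply i j
  · rw [star_trivial, dotProduct_segmentAverage_mulVec hJ]
    refine intervalIntegral.intervalIntegral_pos_of_pos_on (hJ.dotProduct_mulVec v v)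
      (fun t ht => ?_) zero_lt_one
    exact (hpos _ (add_smul_sub_mem_segment p q
      (Set.Ioo_subset_Icc_self ht))).dotProduct_mulVec_pos hv

lemma sub_eq_segmentAverage_mulVec [Finite m] {F : (n → ℝ) → m → ℝ}
    (hJ : SegmentIntegrable J p q)
    (hF : ∀ x ∈ segment ℝ p q, HasFDerivAt F (J x).mulVecLin.toContinuousLinearMap x) :
    F q - F p = segmentAverage J p q *ᵥ (q - p) := by
  cases nonempty_fintype m
  have hasDerivAt_path (t : ℝ) : HasDerivAt (fun t : ℝ => p + t • (q - p)) (q - p) t := by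
    simpa using ((hasDerivAt_id t).smul_const (q - p)).const_add p
  have hasDerivAt_along (i : m) (t : ℝ) (ht : t ∈ Set.uIcc (0 : ℝ) 1) :
      HasDerivAt (fun t : ℝ => F (p + t • (q - p)) i) ((J (p + t • (q - p)) *ᵥ (q - p)) i) t := by
    rw [Set.uIcc_of_le zero_le_one] at ht
    exact hasDerivAt_pi.1
      ((hF _ (add_smul_sub_mem_segment p q ht)).comp_hasDerivAt t (hasDerivAt_path t)) i
  ext i
  rw [segmentAverage_mulVec_apply hJ,
    intervalIntegral.integral_eq_sub_of_hasDerivAt (hasDerivAt_along i) (hJ.mulVec _ i)]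
  simp

end SegmentAverage

section AreaElement

variable {ι : Type*} [Fintype ι]

/-- The area element `W(p) = √(1 + |p|²)` of a graph with gradient `p`, where `|p|` is the Euclidean
norm, not the sup norm carried by `ι → ℝ`. -/
noncomputable def areaElement (p : ι → ℝ) : ℝ :=
  Real.sqrt (1 + ∑ i, p i ^ 2)

lemma areaElement_pos (p : ι → ℝ) : 0 < areaElement p :=
  Real.sqrt_pos.2 (by positivity)

lemma areaElement_sq (p : ι → ℝ) : areaElement p ^ 2 = 1 + ∑ i, p i ^ 2 :=
  Real.sq_sqrt (by positivity)

lemma areaElement_pow_three (p : ι → ℝ) :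
    areaElement p ^ 3 = (1 + ∑ i, p i ^ 2) ^ ((3 : ℝ) / 2) := by
  rw [areaElement, Real.sqrt_eq_rpow, ← Real.rpow_mul_natCast (by positivity)]
  norm_num

lemma continuous_areaElement : Continuous (areaElement : (ι → ℝ) → ℝ) := by
  unfold areaElement
  fun_prop

lemma hasFDerivAt_areaElement (p : ι → ℝ) :
    HasFDerivAt areaElement
      ((areaElement p)⁻¹ • ∑ i, p i • (ContinuousLinearMap.proj i : (ι → ℝ) →L[ℝ] ℝ)) p := by
  have hasFDerivAt_sum_sq : HasFDerivAt (fun x : ι → ℝ => 1 + ∑ i, x i ^ 2)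
      (∑ i, (2 * p i) • (ContinuousLinearMap.proj i : (ι → ℝ) →L[ℝ] ℝ)) p := by
    refine (HasFDerivAt.fun_sum fun i _ => ?_).const_add 1
    simpa using (hasFDerivAt_apply (𝕜 := ℝ) i p).pow 2
  refine (hasFDerivAt_sum_sq.sqrt (by positivity)).congr_fderiv ?_
  ext1 v
  simp [areaElement, mul_assoc, ← Finset.mul_sum]

lemma sqrt_sum_sq_le_max_of_mem_segment {p q x : ι → ℝ} (hx : x ∈ segment ℝ p q) :
    Real.sqrt (∑ i, x i ^ 2) ≤ max (Real.sqrt (∑ i, p i ^ 2)) (Real.sqrt (∑ i, q i ^ 2)) := by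
  have norm_toLp (y : ι → ℝ) : ‖WithLp.toLp 2 y‖ = Real.sqrt (∑ i, y i ^ 2) := by
    simp [EuclideanSpace.norm_eq]
  have convex_norm : ConvexOn ℝ Set.univ fun y : ι → ℝ => ‖WithLp.toLp 2 y‖ :=
    convexOn_univ_norm.comp_linearMap (WithLp.linearEquiv 2 ℝ (ι → ℝ)).symm.toLinearMap
  simpa only [norm_toLp] using
    convex_norm.le_on_segment (Set.mem_univ p) (Set.mem_univ q) hx

lemma areaElement_pow_three_le_of_mem_segment {p q x : ι → ℝ} (hx : x ∈ segment ℝ p q) :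
    areaElement x ^ 3 ≤
      (1 + max (Real.sqrt (∑ i, p i ^ 2)) (Real.sqrt (∑ i, q i ^ 2)) ^ 2) ^ ((3 : ℝ) / 2) := by
  rw [areaElement_pow_three]
  gcongr
  exact (Real.sqrt_le_left (le_max_of_le_left (Real.sqrt_nonneg _))).1
    (sqrt_sum_sq_le_max_of_mem_segment hx)

end AreaElement

section MinimalSurfaceOperator

variable {n : ℕ}

lemma msoA_eq_smul (p : Fin n → ℝ) : msoA n p = (areaElement p)⁻¹ • p := by
  ext i
  simp only [msoA, areaElement, Pi.smul_apply, smul_eq_mul, div_eq_inv_mul]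

lemma msoDA_eq_sub (p : Fin n → ℝ) :
    msoDA n p = (areaElement p)⁻¹ • (1 : Matrix (Fin n) (Fin n) ℝ)
      - (areaElement p ^ 3)⁻¹ • vecMulVec p p := by
  ext i j
  rw [areaElement_pow_three]
  simp only [msoDA, areaElement, Matrix.sub_apply, Matrix.smul_apply, one_apply,
    vecMulVec_apply, smul_eq_mul, div_eq_inv_mul]

lemma msoDA_mulVec (p v : Fin n → ℝ) :
    msoDA n p *ᵥ v = (areaElement p)⁻¹ • v - ((p ⬝ᵥ v) / areaElement p ^ 3) • p := by
  rw [msoDA_eq_sub, sub_mulVec, smul_mulVec, smul_mulVec, one_mulVec, vecMulVec_mulVec,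
    op_smul_eq_smul, smul_smul, div_eq_inv_mul]

lemma continuous_msoDA : Continuous (msoDA n) := by
  simp only [funext msoDA_eq_sub]
  have inv_continuous : Continuous fun p : Fin n → ℝ => (areaElement p)⁻¹ :=
    continuous_areaElement.inv₀ fun p => (areaElement_pos p).ne'
  simp only [← inv_pow]
  fun_prop

lemma hasFDerivAt_msoA (p : Fin n → ℝ) :
    HasFDerivAt (msoA n) (msoDA n p).mulVecLin.toContinuousLinearMap p := by
  have W_ne_zero : areaElement p ≠ 0 := (areaElement_pos p).ne'
  rw [funext msoA_eq_smul]
  have inv_hasFDerivAt :=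
    (hasDerivAt_inv W_ne_zero).comp_hasFDerivAt p (hasFDerivAt_areaElement p)
  refine (inv_hasFDerivAt.smul (hasFDerivAt_id p)).congr_fderiv ?_
  have radial_coeff (s : ℝ) :
      (areaElement p ^ 2)⁻¹ * ((areaElement p)⁻¹ * s) = s / areaElement p ^ 3 := by
    field_simp
  ext1 v
  simp [msoDA_mulVec, dotProduct, sub_eq_add_neg, radial_coeff]

lemma dotProduct_msoDA_mulVec (p v : Fin n → ℝ) :
    v ⬝ᵥ msoDA n p *ᵥ v = (v ⬝ᵥ v) / areaElement p - (p ⬝ᵥ v) ^ 2 / areaElement p ^ 3 := by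
  rw [msoDA_mulVec, dotProduct_sub, dotProduct_smul, dotProduct_smul, dotProduct_comm v p]
  simp only [smul_eq_mul]
  ring

lemma div_le_dotProduct_msoDA_mulVec (p v : Fin n → ℝ) :
    (∑ i, v i ^ 2) / areaElement p ^ 3 ≤ v ⬝ᵥ msoDA n p *ᵥ v := by
  have W_pos := areaElement_pos p
  have cauchy_schwarz : (p ⬝ᵥ v) ^ 2 ≤ (∑ i, p i ^ 2) * ∑ i, v i ^ 2 :=
    Finset.sum_mul_sq_le_sq_mul_sq Finset.univ p v
  have dotProduct_self : v ⬝ᵥ v = ∑ i, v i ^ 2 := by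
    simp only [dotProduct, sq]
  calc (∑ i, v i ^ 2) / areaElement p ^ 3
      ≤ (areaElement p ^ 2 * ∑ i, v i ^ 2 - (p ⬝ᵥ v) ^ 2) / areaElement p ^ 3 := by
        gcongr
        rw [areaElement_sq]
        linarith
    _ = v ⬝ᵥ msoDA n p *ᵥ v := by
        rw [dotProduct_msoDA_mulVec, dotProduct_self]
        field_simp

lemma posDef_msoDA (p : Fin n → ℝ) : (msoDA n p).PosDef := by
  refine PosDef.of_dotProduct_mulVec_pos ?_ fun {v} hv => ?_
  · exact IsHermitian.ext fun i j => by
      simp only [msoDA, star_trivial, eq_comm (a := j), mul_comm (p j)]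
  · have sum_sq_pos : 0 < ∑ i, v i ^ 2 := by
      obtain ⟨i, hi⟩ := Function.ne_iff.1 hv
      exact Finset.sum_pos' (fun _ _ => sq_nonneg _) ⟨i, Finset.mem_univ i, sq_pos_of_ne_zero hi⟩
    exact (div_pos sum_sq_pos (pow_pos (areaElement_pos p) 3)).trans_le
      (div_le_dotProduct_msoDA_mulVec p v)

lemma segmentIntegrable_msoDA (p q : Fin n → ℝ) : SegmentIntegrable (msoDA n) p q :=
  segmentIntegrable_of_continuousOn continuous_msoDA.continuousOn

lemma msoAvg_eq_segmentAverage (p q : Fin n → ℝ) : msoAvg n p q = segmentAverage (msoDA n) p q :=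
  rfl

end MinimalSurfaceOperator

/-- **Mean value representation with uniformly elliptic averaged coefficients.**
`A(q) − A(p) = a (q − p)` where `a = ∫₀¹ DA(p + t(q−p)) dt`; moreover `a` is
positive definite and `ξᵀ a ξ ≥ |ξ|² / (1 + max(|p|,|q|)²)^{3/2}` for all `ξ`. -/
theorem msoA_mean_value (n : ℕ) (p q : Fin n → ℝ) :
    msoA n q - msoA n p = msoAvg n p q *ᵥ (q - p) ∧
    (msoAvg n p q).PosDef ∧
    (∀ ξ : Fin n → ℝ,
      (∑ i, ξ i ^ 2) /
          (1 + max (Real.sqrt (∑ i, p i ^ 2)) (Real.sqrt (∑ i, q i ^ 2)) ^ 2)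
            ^ ((3 : ℝ) / 2)
        ≤ ξ ⬝ᵥ (msoAvg n p q *ᵥ ξ)) := by
  have integrable := segmentIntegrable_msoDA p q
  rw [msoAvg_eq_segmentAverage]
  refine ⟨sub_eq_segmentAverage_mulVec integrable fun x _ => hasFDerivAt_msoA x,
    posDef_segmentAverage integrable fun x _ => posDef_msoDA x,
    fun ξ => le_dotProduct_segmentAverage_mulVec integrable fun x hx => ?_⟩
  refine le_trans ?_ (div_le_dotProduct_msoDA_mulVec x ξ)
  have W_pos := areaElement_pos x
  gcongr
  exact areaElement_pow_three_le_of_mem_segment hx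
end

section
/- Strong comparison principle for the minimal surface operator: let Ω ⊆ ℝⁿ be a connected open set, and let u₁, u₂ be twice continuously differentiable real-valued functions on Ω with M(u₁)(x) ≤ M(u₂)(x) for all x ∈ Ω, where M is the minimal surface operator, and u₂(x) ≤ u₁(x) for all x ∈ Ω. If there exists x₀ ∈ Ω with u₁(x₀) = u₂(x₀), then u₁ = u₂ identically on Ω. (Geometrically: a minimal graph cannot touch, from the side on which it lies, another graph whose mean curvature points strictly away from it, unless the two coincide locally.) -/
/-- The `i`-th partial derivative of `u : ℝⁿ → ℝ` at `x`. -/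
noncomputable def pderiv' {n : ℕ} (u : (Fin n → ℝ) → ℝ) (i : Fin n)
    (x : Fin n → ℝ) : ℝ :=
  fderiv ℝ u x (Pi.single i 1)

/-- The minimal surface operator in divergence form,
`M(u) = ∑ᵢ Dᵢ (Dᵢu / √(1 + |Du|²))`. -/
noncomputable def minSurfOp {n : ℕ} (u : (Fin n → ℝ) → ℝ) (x : Fin n → ℝ) : ℝ :=
  ∑ i, fderiv ℝ
    (fun y => pderiv' u i y / Real.sqrt (1 + ∑ j, (pderiv' u j y) ^ 2))
    x (Pi.single i 1)

/-!
In nondivergence form, `M(u) = tr (a(Du) D²u)` with `a(p)` the positive definite Jacobian of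
`p ↦ p / √(1 + |p|²)`. At a zero of `w = u₁ - u₂ ≥ 0` the gradients of `u₁` and `u₂` agree; since
`a` is locally Lipschitz and `D²u₂` is locally bounded, `tr (a(Du₁) D²w) ≤ C |Dw|` near that zero.
If the zero set of `w` were not open, some ball would touch it at exactly one point, and comparing
`w` there with a small multiple of the Hopf barrier `exp (-α |x - c|²)` would produce a point with
`tr (a(Du₁) D²w) > C |Dw|`. So the zero set is open and closed in the connected set `Ω`.
-/

open Filter Topology Set Metric Matrix Asymptotics

section LocalMin

lemma deriv_deriv_nonneg_of_isLocalMin {φ : ℝ → ℝ} {x : ℝ} (hmin : IsLocalMin φ x)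
    (hφ : ContinuousAt φ x) : 0 ≤ deriv (deriv φ) x := by
  by_contra! hneg
  have hmax : IsLocalMax φ x := isLocalMax_of_deriv_deriv_neg hneg hmin.deriv_eq_zero hφ
  have hconst : φ =ᶠ[𝓝 x] fun _ ↦ φ x := by
    filter_upwards [hmin, hmax] with t h_ge h_le using le_antisymm h_le h_ge
  have hzero : deriv (deriv φ) x = 0 := by simp [hconst.deriv.deriv_eq]
  exact hneg.ne hzero

variable {E : Type*} [NormedAddCommGroup E] [NormedSpace ℝ E]

lemma deriv_deriv_comp_line {f : E → ℝ} {x : E} (hf : ContDiffAt ℝ 2 f x) (v : E) :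
    deriv (deriv fun t : ℝ ↦ f (x + t • v)) 0 = bilinearIteratedFDerivTwo ℝ f x v v := by
  have hline (t : ℝ) : HasDerivAt (fun t : ℝ ↦ x + t • v) v t := by
    simpa using ((hasDerivAt_id t).smul_const v).const_add x
  have hline_zero : Tendsto (fun t : ℝ ↦ x + t • v) (𝓝 0) (𝓝 x) := by
    simpa using (hline 0).continuousAt.tendsto
  have hderiv : deriv (fun t : ℝ ↦ f (x + t • v)) =ᶠ[𝓝 0] fun t ↦ fderiv ℝ f (x + t • v) v := by
    filter_upwards [hline_zero.eventually (hf.eventually (by simp))] with t ht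
    exact ((ht.differentiableAt two_ne_zero).hasFDerivAt.comp_hasDerivAt t (hline t)).deriv
  have hf' : DifferentiableAt ℝ (fderiv ℝ f) x :=
    (hf.fderiv_right (m := 1) (by norm_num)).differentiableAt one_ne_zero
  have hderiv₂ : HasDerivAt (fun t : ℝ ↦ fderiv ℝ f (x + t • v))
      (fderiv ℝ (fderiv ℝ f) x v) 0 :=
    hf'.hasFDerivAt.comp_hasDerivAt_of_eq 0 (hline 0) (by simp)
  rw [hderiv.deriv_eq, bilinearIteratedFDerivTwo_eq_iteratedFDeriv, iteratedFDeriv_two_apply,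
    deriv_clm_apply hderiv₂.differentiableAt (differentiableAt_const v)]
  simp [hderiv₂.deriv]

lemma bilinearIteratedFDerivTwo_nonneg_of_isLocalMin {f : E → ℝ} {x : E}
    (hmin : IsLocalMin f x) (hf : ContDiffAt ℝ 2 f x) (v : E) :
    0 ≤ bilinearIteratedFDerivTwo ℝ f x v v := by
  have hline : Continuous fun t : ℝ ↦ x + t • v := by fun_prop
  have hline_zero : Tendsto (fun t : ℝ ↦ x + t • v) (𝓝 0) (𝓝 x) :=
    hline.tendsto' _ _ (by simp)
  have hmin_line : IsLocalMin (fun t : ℝ ↦ f (x + t • v)) 0 := by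
    simpa [IsLocalMin, IsMinFilter] using hline_zero.eventually hmin
  rw [← deriv_deriv_comp_line hf]
  exact deriv_deriv_nonneg_of_isLocalMin hmin_line
    (hf.continuousAt.comp_of_eq hline.continuousAt (by simp))

end LocalMin

open scoped MatrixOrder ComplexOrder in
lemma trace_mul_nonneg_of_posSemidef {ι 𝕜 : Type*} [Fintype ι] [RCLike 𝕜] {A B : Matrix ι ι 𝕜}
    (hA : A.PosSemidef) (hB : B.PosSemidef) : 0 ≤ (A * B).trace := by
  classical
  obtain ⟨R, rfl⟩ := CStarAlgebra.nonneg_iff_eq_star_mul_self.mp hA.nonneg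
  rw [star_eq_conjTranspose, ← trace_mul_cycle]
  exact (hB.mul_mul_conjTranspose_same R).trace_nonneg

lemma exists_mul_lt_of_isCompact {X : Type*} [TopologicalSpace X] {S : Set X} {w h : X → ℝ}
    (hS : IsCompact S) (hw : ContinuousOn w S) (hh : ContinuousOn h S) (hw₀ : ∀ x ∈ S, 0 ≤ w x)
    (hpos : ∀ x ∈ S, 0 ≤ h x → 0 < w x) : ∃ ε > 0, ∀ x ∈ S, ε * h x < w x := by
  have hmax : ∀ x ∈ S, 0 < max (w x) (-h x) := fun x hx ↦ by
    rcases le_or_gt 0 (h x) with h_nonneg | h_neg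
    · exact lt_max_of_lt_left (hpos x hx h_nonneg)
    · exact lt_max_of_lt_right (neg_pos.mpr h_neg)
  obtain ⟨δ, hδ, hδ_le⟩ := hS.exists_forall_le' (ContinuousOn.sup hw hh.neg) hmax
  obtain ⟨M, hM⟩ := hS.exists_bound_of_continuousOn hh
  refine ⟨δ / (|M| + 1), by positivity, fun x hx ↦ ?_⟩
  rcases le_or_gt 0 (h x) with h_nonneg | h_neg
  · have hδw : δ ≤ w x := by
      rcases le_max_iff.mp (hδ_le x hx) with h_le | h_le
      · exact h_le
      · exact absurd (h_le.trans (neg_nonpos.mpr h_nonneg)) hδ.not_ge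
    have hhM : h x < |M| + 1 := by
      linarith [le_abs_self (h x), hM x hx, Real.norm_eq_abs (h x), le_abs_self M]
    calc δ / (|M| + 1) * h x < δ / (|M| + 1) * (|M| + 1) := by gcongr
      _ = δ := by field_simp
      _ ≤ w x := hδw
  · exact (mul_neg_of_pos_of_neg (by positivity) h_neg).trans_le (hw₀ x hx)

section TouchingBall

lemma exists_closedBall_inter_eq_singleton {E : Type*} [NormedAddCommGroup E] [NormedSpace ℝ E]
    [StrictConvexSpace ℝ E] [ProperSpace E] {K U : Set E} {z : E} (hK : IsClosed K) (hz : z ∈ K)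
    (hzK : K ∉ 𝓝 z) (hU : U ∈ 𝓝 z) :
    ∃ y ∈ U, ∃ c, c ≠ y ∧ K ∩ closedBall c (dist y c) = {y} := by
  obtain ⟨r, hr, hrU⟩ := Metric.mem_nhds_iff.mp hU
  obtain ⟨p, hp, hpK⟩ : ∃ p ∈ ball z (r / 2), p ∉ K := by
    by_contra! h
    exact hzK (mem_of_superset (ball_mem_nhds z (half_pos hr)) h)
  obtain ⟨y, hyK, hy⟩ := hK.exists_infDist_eq_dist ⟨z, hz⟩ p
  have hnearest : ∀ x ∈ K, dist p y ≤ dist p x := fun x hx ↦ hy ▸ infDist_le_dist_of_mem hx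
  have hpy : p ≠ y := fun h ↦ hpK (h ▸ hyK)
  refine ⟨y, hrU ?_, midpoint ℝ p y, by simpa using hpy, ?_⟩
  · have hpz : dist p z < r / 2 := hp
    calc dist y z ≤ dist p y + dist p z := dist_triangle_left ..
      _ ≤ dist p z + dist p z := by gcongr; exact hnearest z hz
      _ < r := by linarith
  · have hhalf (q : E) : dist q (midpoint ℝ p q) = dist p q / 2 := by
      rw [dist_right_midpoint]; norm_num; ring
    have hhalf' (q : E) : dist p (midpoint ℝ p q) = dist p q / 2 := by
      rw [dist_left_midpoint]; norm_num; ring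
    ext x
    refine ⟨fun ⟨hxK, hx⟩ ↦ ?_, ?_⟩
    · rw [mem_closedBall, hhalf y, dist_comm] at hx
      have htri := dist_triangle p (midpoint ℝ p y) x
      have hxy : dist p x = dist p y := by linarith [hnearest x hxK, hhalf' y]
      have hmid : midpoint ℝ p y = midpoint ℝ p x :=
        eq_midpoint_of_dist_eq_half (by rw [hhalf' y, hxy]) (by linarith [hhalf' y])
      simpa [midpoint_eq_smul_add] using hmid.symm
    · rintro rfl
      exact ⟨hyK, by simp⟩

lemma exists_touching_sphere {n : ℕ} {K U : Set (Fin n → ℝ)} {z : Fin n → ℝ}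
    (hK : IsClosed K) (hz : z ∈ K) (hzK : K ∉ 𝓝 z) (hU : U ∈ 𝓝 z) :
    ∃ y ∈ K ∩ U, ∃ c, c ≠ y ∧ ∀ x ∈ K, (x - c) ⬝ᵥ (x - c) ≤ (y - c) ⬝ᵥ (y - c) → x = y := by
  let e : EuclideanSpace ℝ (Fin n) ≃ₜ (Fin n → ℝ) := PiLp.homeomorph 2 fun _ ↦ ℝ
  have hdist (a b : Fin n → ℝ) : dist (e.symm a) (e.symm b) ^ 2 = (a - b) ⬝ᵥ (a - b) := by
    rw [EuclideanSpace.dist_sq_eq]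
    exact Finset.sum_congr rfl fun i _ ↦ (sq_abs _).trans (sq _)
  obtain ⟨y, hyU, c, hcy, hKc⟩ := exists_closedBall_inter_eq_singleton (K := e ⁻¹' K)
    (U := e ⁻¹' U) (z := e.symm z) (hK.preimage e.continuous) (by simpa using hz)
    (by rw [← e.symm.map_nhds_eq]; exact hzK)
    (e.continuous.continuousAt.preimage_mem_nhds (by simpa using hU))
  have hyK : e y ∈ K := (hKc.ge rfl).1
  refine ⟨e y, ⟨hyK, hyU⟩, e c, e.injective.ne hcy, fun x hx hxc ↦ ?_⟩
  rw [← hdist, ← hdist, e.symm_apply_apply, e.symm_apply_apply,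
    sq_le_sq₀ dist_nonneg dist_nonneg] at hxc
  have hxy : e.symm x = y := hKc.le ⟨by simpa using hx, hxc⟩
  simp [← hxy]

end TouchingBall

section Hessian

variable {n : ℕ} {f g : (Fin n → ℝ) → ℝ} {x : Fin n → ℝ}

/-- The gradient `Du`, as the vector of partial derivatives. -/
noncomputable def grad (u : (Fin n → ℝ) → ℝ) (x : Fin n → ℝ) : Fin n → ℝ :=
  fun i ↦ pderiv' u i x

/-- The Hessian matrix `D²u`, with entries `D²u(x)(eᵢ, eⱼ)`. -/
noncomputable def hessMatrix (u : (Fin n → ℝ) → ℝ) (x : Fin n → ℝ) :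
    Matrix (Fin n) (Fin n) ℝ :=
  LinearMap.toMatrix₂' ℝ (bilinearIteratedFDerivTwo ℝ u x)

lemma fderiv_apply_eq_dotProduct_grad (u : (Fin n → ℝ) → ℝ) (x v : Fin n → ℝ) :
    fderiv ℝ u x v = v ⬝ᵥ grad u x := by
  conv_lhs => rw [pi_eq_sum_univ' v, map_sum]
  simp [dotProduct, grad, pderiv']

lemma grad_sub (hf : DifferentiableAt ℝ f x) (hg : DifferentiableAt ℝ g x) :
    grad (f - g) x = grad f x - grad g x := by
  ext i
  simp [grad, pderiv', fderiv_sub hf hg]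

lemma grad_const_smul (ε : ℝ) (hf : DifferentiableAt ℝ f x) :
    grad (ε • f) x = ε • grad f x := by
  ext i
  simp [grad, pderiv', fderiv_const_smul hf]

lemma hessMatrix_eq_iteratedFDeriv (f : (Fin n → ℝ) → ℝ) (x : Fin n → ℝ) (i j : Fin n) :
    hessMatrix f x i j = iteratedFDeriv ℝ 2 f x ![Pi.single i 1, Pi.single j 1] := by
  rw [hessMatrix, LinearMap.toMatrix₂'_apply, bilinearIteratedFDerivTwo_eq_iteratedFDeriv]

lemma hessMatrix_sub (hf : ContDiffAt ℝ 2 f x) (hg : ContDiffAt ℝ 2 g x) :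
    hessMatrix (f - g) x = hessMatrix f x - hessMatrix g x := by
  ext i j
  simp [hessMatrix_eq_iteratedFDeriv, iteratedFDeriv_sub_apply hf hg]

lemma hessMatrix_const_smul (ε : ℝ) (hf : ContDiffAt ℝ 2 f x) :
    hessMatrix (ε • f) x = ε • hessMatrix f x := by
  ext i j
  simp [hessMatrix_eq_iteratedFDeriv, iteratedFDeriv_const_smul_apply hf]

lemma hasFDerivAt_pderiv' (hf : ContDiffAt ℝ 2 f x) (j : Fin n) :
    HasFDerivAt (pderiv' f j) ((fderiv ℝ (fderiv ℝ f) x).flip (Pi.single j 1)) x := by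
  have hf' : DifferentiableAt ℝ (fderiv ℝ f) x :=
    (hf.fderiv_right (m := 1) (by norm_num)).differentiableAt one_ne_zero
  exact (hf'.hasFDerivAt.clm_apply (hasFDerivAt_const (Pi.single j 1) x)).congr_fderiv (by simp)

lemma hessMatrix_apply (hf : ContDiffAt ℝ 2 f x) (i j : Fin n) :
    hessMatrix f x i j = pderiv' (pderiv' f j) i x := by
  rw [hessMatrix_eq_iteratedFDeriv, iteratedFDeriv_two_apply, pderiv',
    (hasFDerivAt_pderiv' hf j).fderiv]
  rfl

lemma isHermitian_hessMatrix (hf : ContDiffAt ℝ 2 f x) : (hessMatrix f x).IsHermitian := by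
  ext i j
  have hsymm : IsSymmSndFDerivAt ℝ f x := hf.isSymmSndFDerivAt (by simp)
  simpa [hessMatrix_eq_iteratedFDeriv, iteratedFDeriv_two_apply] using hsymm _ _

lemma hasFDerivAt_grad (hf : ContDiffAt ℝ 2 f x) :
    HasFDerivAt (grad f) (mulVecLin (hessMatrix f x)).toContinuousLinearMap x := by
  refine hasFDerivAt_pi'.mpr fun j ↦
    (hasFDerivAt_pderiv' hf j).differentiableAt.hasFDerivAt.congr_fderiv ?_
  ext1 v
  calc fderiv ℝ (pderiv' f j) x v = grad (pderiv' f j) x ⬝ᵥ v := by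
        rw [fderiv_apply_eq_dotProduct_grad, dotProduct_comm]
    _ = hessMatrix f x j ⬝ᵥ v := by
        congr 1
        ext i
        rw [grad, ← hessMatrix_apply hf, ← (isHermitian_hessMatrix hf).apply, star_trivial]

lemma posSemidef_hessMatrix_of_isLocalMin (hmin : IsLocalMin f x) (hf : ContDiffAt ℝ 2 f x) :
    (hessMatrix f x).PosSemidef := by
  refine .of_dotProduct_mulVec_nonneg (isHermitian_hessMatrix hf) fun v ↦ ?_
  rw [star_trivial, ← toLinearMap₂'_apply', hessMatrix, toLinearMap₂'_toMatrix']
  exact bilinearIteratedFDerivTwo_nonneg_of_isLocalMin hmin hf v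

lemma continuousAt_grad (hf : ContDiffAt ℝ 1 f x) : ContinuousAt (grad f) x :=
  continuousAt_pi.mpr fun _ ↦
    (hf.fderiv_right (m := 0) (by norm_num)).continuousAt.clm_apply continuousAt_const

lemma continuousAt_hessMatrix (hf : ContDiffAt ℝ 2 f x) : ContinuousAt (hessMatrix f) x := by
  refine continuousAt_pi.mpr fun i ↦ continuousAt_pi.mpr fun j ↦ ?_
  simp only [hessMatrix_eq_iteratedFDeriv]
  have h : ContinuousAt (iteratedFDeriv ℝ 2 f) x :=
    (hf.iteratedFDeriv_right (m := 0) (by norm_num)).continuousAt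
  exact (ContinuousMultilinearMap.apply ℝ (fun _ : Fin 2 ↦ Fin n → ℝ) ℝ
    ![Pi.single i 1, Pi.single j 1]).continuous.continuousAt.comp h

lemma grad_eq_of_isLocalMin_sub (hmin : IsLocalMin (f - g) x) (hf : DifferentiableAt ℝ f x)
    (hg : DifferentiableAt ℝ g x) : grad f x = grad g x := by
  rw [← sub_eq_zero, ← grad_sub hf hg]
  ext i
  simp [grad, pderiv', hmin.fderiv_eq_zero]

lemma trace_mul_hessMatrix_le_of_isLocalMin_sub {A : Matrix (Fin n) (Fin n) ℝ}
    (hA : A.PosSemidef) (hmin : IsLocalMin (f - g) x) (hf : ContDiffAt ℝ 2 f x)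
    (hg : ContDiffAt ℝ 2 g x) : (A * hessMatrix g x).trace ≤ (A * hessMatrix f x).trace := by
  rw [← sub_nonneg, ← trace_sub, ← mul_sub, ← hessMatrix_sub hf hg]
  exact trace_mul_nonneg_of_posSemidef hA (posSemidef_hessMatrix_of_isLocalMin hmin (hf.sub hg))

end Hessian

section Barrier

variable {n : ℕ}

lemma hasFDerivAt_dotProduct_self (x : Fin n → ℝ) :
    HasFDerivAt (fun y : Fin n → ℝ ↦ y ⬝ᵥ y)
      ((2 : ℝ) • (dotProductBilin ℝ ℝ x).toContinuousLinearMap) x := by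
  have hcoord (i : Fin n) : HasFDerivAt (fun y : Fin n → ℝ ↦ y i)
      (ContinuousLinearMap.proj i : (Fin n → ℝ) →L[ℝ] ℝ) x := hasFDerivAt_apply i x
  have hsum : HasFDerivAt (fun y : Fin n → ℝ ↦ y ⬝ᵥ y) _ x :=
    HasFDerivAt.fun_sum fun i _ ↦ (hcoord i).mul (hcoord i)
  refine hsum.congr_fderiv ?_
  ext v
  simp [dotProduct, Finset.sum_add_distrib, two_mul]

/-- The Hopf barrier `exp (-α |x - c|²)`, radially decreasing about its centre `c`. -/
noncomputable def gaussianBarrier (c : Fin n → ℝ) (α : ℝ) (x : Fin n → ℝ) : ℝ :=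
  Real.exp (-α * ((x - c) ⬝ᵥ (x - c)))

lemma contDiff_gaussianBarrier (c : Fin n → ℝ) (α : ℝ) {k : WithTop ℕ∞} :
    ContDiff ℝ k (gaussianBarrier c α) := by
  unfold gaussianBarrier dotProduct
  fun_prop

lemma pderiv'_gaussianBarrier (c : Fin n → ℝ) (α : ℝ) (i : Fin n) (x : Fin n → ℝ) :
    pderiv' (gaussianBarrier c α) i x = gaussianBarrier c α x * (-2 * α * (x i - c i)) := by
  have hsq : HasFDerivAt (fun x : Fin n → ℝ ↦ (x - c) ⬝ᵥ (x - c)) _ x :=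
    HasFDerivAt.comp (g := fun y ↦ y ⬝ᵥ y) (f := fun x ↦ x - c) x
      (hasFDerivAt_dotProduct_self (x - c)) ((hasFDerivAt_id x).sub_const c)
  have hexp : HasFDerivAt (gaussianBarrier c α) _ x := (hsq.const_mul (-α)).exp
  rw [pderiv', hexp.fderiv]
  simp [gaussianBarrier, mul_assoc, mul_left_comm]

lemma grad_gaussianBarrier (c : Fin n → ℝ) (α : ℝ) (x : Fin n → ℝ) :
    grad (gaussianBarrier c α) x = (-2 * α * gaussianBarrier c α x) • (x - c) := by
  ext i
  simp only [grad, pderiv'_gaussianBarrier, Pi.smul_apply, Pi.sub_apply, smul_eq_mul]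
  ring

lemma hessMatrix_gaussianBarrier (c : Fin n → ℝ) (α : ℝ) (x : Fin n → ℝ) :
    hessMatrix (gaussianBarrier c α) x = gaussianBarrier c α x •
      ((4 * α ^ 2) • vecMulVec (x - c) (x - c) - (2 * α) • (1 : Matrix (Fin n) (Fin n) ℝ)) := by
  ext i j
  have hg : DifferentiableAt ℝ (gaussianBarrier c α) x :=
    (contDiff_gaussianBarrier c α).contDiffAt.differentiableAt one_ne_zero
  have hcoord : HasFDerivAt (fun x : Fin n → ℝ ↦ -2 * α * (x j - c j))
      ((-2 * α) • (ContinuousLinearMap.proj j : (Fin n → ℝ) →L[ℝ] ℝ)) x :=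
    ((hasFDerivAt_apply j x).sub_const _).const_mul _
  rw [hessMatrix_apply (contDiff_gaussianBarrier c α).contDiffAt,
    funext (pderiv'_gaussianBarrier c α j), pderiv',
    (hg.hasFDerivAt.fun_mul hcoord).fderiv]
  have hgi := pderiv'_gaussianBarrier c α i x
  rw [pderiv'] at hgi
  simp only [_root_.add_apply, _root_.smul_apply, hgi,
    ContinuousLinearMap.proj_apply, smul_eq_mul, Matrix.smul_apply, Matrix.sub_apply,
    vecMulVec_apply, Pi.sub_apply, Matrix.one_apply, Pi.single_apply, eq_comm]
  split_ifs <;> ring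

lemma trace_mul_hessMatrix_gaussianBarrier (B : Matrix (Fin n) (Fin n) ℝ) (c : Fin n → ℝ) (α : ℝ)
    (x : Fin n → ℝ) : (B * hessMatrix (gaussianBarrier c α) x).trace =
      2 * α * gaussianBarrier c α x * (2 * α * ((x - c) ⬝ᵥ B *ᵥ (x - c)) - B.trace) := by
  rw [hessMatrix_gaussianBarrier, Matrix.mul_smul, mul_sub, Matrix.mul_smul, Matrix.mul_smul,
    mul_vecMulVec, mul_one, trace_smul, trace_sub, trace_smul, trace_smul, trace_vecMulVec,
    dotProduct_comm]
  simp only [smul_eq_mul]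
  ring

lemma norm_grad_gaussianBarrier (c : Fin n → ℝ) {α : ℝ} (hα : 0 ≤ α) (x : Fin n → ℝ) :
    ‖grad (gaussianBarrier c α) x‖ = 2 * α * gaussianBarrier c α x * ‖x - c‖ := by
  have hg : 0 < gaussianBarrier c α x := Real.exp_pos _
  rw [grad_gaussianBarrier, norm_smul, Real.norm_eq_abs, neg_mul, neg_mul, abs_neg,
    abs_of_nonneg (by positivity)]

lemma gaussianBarrier_le_gaussianBarrier_iff {c x y : Fin n → ℝ} {α : ℝ} (hα : 0 < α) :
    gaussianBarrier c α y ≤ gaussianBarrier c α x ↔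
      (x - c) ⬝ᵥ (x - c) ≤ (y - c) ⬝ᵥ (y - c) := by
  rw [gaussianBarrier, gaussianBarrier, Real.exp_le_exp, neg_mul, neg_mul, neg_le_neg_iff,
    mul_le_mul_iff_right₀ hα]

end Barrier

section LinearStrongMinimum

variable {n : ℕ} {A : (Fin n → ℝ) → Matrix (Fin n) (Fin n) ℝ} {w : (Fin n → ℝ) → ℝ}

lemma exists_gaussianBarrier_strict_subsolution {y c : Fin n → ℝ} (hA : ContinuousAt A y)
    (hAy : (A y).PosDef) (hcy : c ≠ y) (C : ℝ) :
    ∃ α > 0, ∀ᶠ x in 𝓝 y, C * ‖grad (gaussianBarrier c α) x‖ <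
      (A x * hessMatrix (gaussianBarrier c α) x).trace := by
  set Q := (y - c) ⬝ᵥ A y *ᵥ (y - c)
  set N := C * ‖y - c‖ + (A y).trace
  have hQ : 0 < Q := hAy.dotProduct_mulVec_pos (sub_ne_zero.mpr hcy.symm)
  obtain ⟨α, hα, hlt⟩ : ∃ α > 0, N < 2 * α * Q := by
    refine ⟨(|N| + 1) / (2 * Q), by positivity, ?_⟩
    calc N < |N| + 1 := (le_abs_self N).trans_lt (lt_add_one _)
      _ = 2 * ((|N| + 1) / (2 * Q)) * Q := by field_simp
  have hsub : ContinuousAt (fun x ↦ x - c) y := by fun_prop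
  have hcontN : ContinuousAt (fun x ↦ C * ‖x - c‖ + (A x).trace) y :=
    (hsub.norm.const_mul C).add ((Continuous.matrix_trace continuous_id).continuousAt.comp hA)
  have hcontQ : ContinuousAt (fun x ↦ 2 * α * ((x - c) ⬝ᵥ A x *ᵥ (x - c))) y := by
    have h : Continuous fun q : Matrix (Fin n) (Fin n) ℝ × (Fin n → ℝ) ↦
        2 * α * (q.2 ⬝ᵥ q.1 *ᵥ q.2) :=
      continuous_const.mul
        (continuous_snd.dotProduct (continuous_fst.matrix_mulVec continuous_snd))
    exact h.continuousAt.comp (hA.prodMk hsub)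
  refine ⟨α, hα, ?_⟩
  filter_upwards [hcontN.eventually_lt hcontQ hlt] with x hx
  have hg : 0 < gaussianBarrier c α x := Real.exp_pos _
  rw [trace_mul_hessMatrix_gaussianBarrier, norm_grad_gaussianBarrier c hα.le, mul_left_comm]
  gcongr
  linarith

lemma not_isLocalMin_sub_of_strict_subsolution {B : Matrix (Fin n) (Fin n) ℝ}
    {v : (Fin n → ℝ) → ℝ} {x : Fin n → ℝ} {C : ℝ} (hB : B.PosSemidef) (hw : ContDiffAt ℝ 2 w x)
    (hv : ContDiffAt ℝ 2 v x) (hsuper : (B * hessMatrix w x).trace ≤ C * ‖grad w x‖)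
    (hsub : C * ‖grad v x‖ < (B * hessMatrix v x).trace) : ¬IsLocalMin (w - v) x := fun hmin ↦ by
  have hgrad : grad w x = grad v x := grad_eq_of_isLocalMin_sub hmin
    (hw.differentiableAt two_ne_zero) (hv.differentiableAt two_ne_zero)
  have hhess := trace_mul_hessMatrix_le_of_isLocalMin_sub hB hmin hw hv
  rw [hgrad] at hsuper
  exact (hsub.trans_le (hhess.trans hsuper)).false

lemma strict_subsolution_const_smul {B : Matrix (Fin n) (Fin n) ℝ} {v : (Fin n → ℝ) → ℝ}
    {x : Fin n → ℝ} {C ε : ℝ} (hε : 0 < ε) (hv : ContDiffAt ℝ 2 v x)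
    (hsub : C * ‖grad v x‖ < (B * hessMatrix v x).trace) :
    C * ‖grad (ε • v) x‖ < (B * hessMatrix (ε • v) x).trace := by
  rw [grad_const_smul ε (hv.differentiableAt two_ne_zero), hessMatrix_const_smul ε hv,
    Matrix.mul_smul, trace_smul, norm_smul, Real.norm_of_nonneg hε.le, mul_left_comm, smul_eq_mul]
  gcongr

-- Otherwise `w > 0` on the part of a small sphere about `y` where the barrier `g` is at least
-- `g y`, so `w - ε g` dips below its boundary values at `y` and has an interior minimum.
lemma frequently_eq_zero_in_ball_of_supersolution {y c : Fin n → ℝ} {C : ℝ}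
    (hA : ContinuousAt A y) (hApos : ∀ᶠ x in 𝓝 y, (A x).PosDef)
    (hw : ∀ᶠ x in 𝓝 y, ContDiffAt ℝ 2 w x) (hw₀ : ∀ᶠ x in 𝓝 y, 0 ≤ w x)
    (hsuper : ∀ᶠ x in 𝓝 y, (A x * hessMatrix w x).trace ≤ C * ‖grad w x‖)
    (hwy : w y = 0) (hcy : c ≠ y) :
    ∃ᶠ x in 𝓝[≠] y, (x - c) ⬝ᵥ (x - c) ≤ (y - c) ⬝ᵥ (y - c) ∧ w x = 0 := by
  intro hne
  obtain ⟨α, hα, hsub⟩ := exists_gaussianBarrier_strict_subsolution hA hApos.self_of_nhds hcy C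
  set g := gaussianBarrier c α
  have hg (x : Fin n → ℝ) : ContDiffAt ℝ 2 g x := (contDiff_gaussianBarrier c α).contDiffAt
  obtain ⟨ρ, hρ, hball⟩ := Metric.nhds_basis_closedBall.eventually_iff.mp
    (hApos.and (hw.and (hw₀.and (hsuper.and (hsub.and (eventually_nhdsWithin_iff.mp hne))))))
  have hw_cont : ContinuousOn w (closedBall y ρ) := fun x hx ↦
    (hball hx).2.1.continuousAt.continuousWithinAt
  have hg_cont : Continuous g := (contDiff_gaussianBarrier c α (k := 0)).continuous
  have hpos : ∀ x ∈ sphere y ρ, 0 ≤ g x - g y → 0 < w x := fun x hx hgx ↦ by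
    obtain ⟨-, -, hwx, -, -, hne_x⟩ := hball (sphere_subset_closedBall hx)
    have hq := (gaussianBarrier_le_gaussianBarrier_iff hα).mp (sub_nonneg.mp hgx)
    exact hwx.lt_of_ne' fun hzero ↦ hne_x (ne_of_mem_sphere hx hρ.ne') ⟨hq, hzero⟩
  obtain ⟨ε, hε, hlt⟩ : ∃ ε > 0, ∀ x ∈ sphere y ρ, ε * (g x - g y) < w x :=
    exists_mul_lt_of_isCompact (isCompact_sphere y ρ) (hw_cont.mono sphere_subset_closedBall)
      (hg_cont.sub continuous_const).continuousOn
      (fun x hx ↦ (hball (sphere_subset_closedBall hx)).2.2.1) hpos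
  have hboundary : ∀ x ∈ sphere y ρ, (w - ε • g) y < (w - ε • g) x := fun x hx ↦ by
    simp only [Pi.sub_apply, Pi.smul_apply, smul_eq_mul, hwy]
    linarith [hlt x hx]
  obtain ⟨x, hx, hmin⟩ := Metric.exists_isLocalMin_mem_ball
    (hw_cont.sub (hg_cont.const_smul ε).continuousOn) (mem_closedBall_self hρ.le) hboundary
  obtain ⟨hAx, hwx, -, hsuper_x, hsub_x, -⟩ := hball (ball_subset_closedBall hx)
  exact not_isLocalMin_sub_of_strict_subsolution hAx.posSemidef hwx ((hg x).const_smul ε) hsuper_x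
    (strict_subsolution_const_smul hε (hg x) hsub_x) hmin

variable {Ω : Set (Fin n → ℝ)} {x₀ : Fin n → ℝ}

lemma eventually_eq_zero_of_supersolution (hΩ : IsOpen Ω) (hA : ContinuousOn A Ω)
    (hApos : ∀ x ∈ Ω, (A x).PosDef) (hw : ContDiffOn ℝ 2 w Ω) (hw₀ : ∀ x ∈ Ω, 0 ≤ w x)
    (hsuper : ∀ y ∈ Ω, w y = 0 →
      ∃ C, ∀ᶠ x in 𝓝 y, (A x * hessMatrix w x).trace ≤ C * ‖grad w x‖)
    (hx₀ : x₀ ∈ Ω) (hwx₀ : w x₀ = 0) : ∀ᶠ x in 𝓝 x₀, w x = 0 := by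
  by_contra hne
  obtain ⟨r, hr, hrΩ⟩ := Metric.nhds_basis_closedBall.mem_iff.mp (hΩ.mem_nhds hx₀)
  have hK : IsClosed (closedBall x₀ r ∩ w ⁻¹' {0}) :=
    (hw.continuousOn.mono hrΩ).preimage_isClosed_of_isClosed isClosed_closedBall
      isClosed_singleton
  obtain ⟨y, ⟨⟨-, hwy⟩, hyr⟩, c, hcy, htouch⟩ := exists_touching_sphere hK
    ⟨mem_closedBall_self hr.le, hwx₀⟩ (fun h ↦ hne (mem_of_superset h inter_subset_right))
    (ball_mem_nhds x₀ hr)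
  have hyΩ : Ω ∈ 𝓝 y := hΩ.mem_nhds (hrΩ (ball_subset_closedBall hyr))
  obtain ⟨C, hC⟩ := hsuper y (mem_of_mem_nhds hyΩ) hwy
  have hfreq := frequently_eq_zero_in_ball_of_supersolution (hA.continuousAt hyΩ)
    (mem_of_superset hyΩ hApos)
    (mem_of_superset hyΩ fun x hx ↦ hw.contDiffAt (hΩ.mem_nhds hx))
    (mem_of_superset hyΩ hw₀) hC hwy hcy
  refine hfreq (eventually_nhdsWithin_iff.mpr ?_)
  filter_upwards [isOpen_ball.mem_nhds hyr] with x hx hxy ⟨hq, hwx⟩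
  exact hxy (htouch x ⟨ball_subset_closedBall hx, hwx⟩ hq)

theorem eq_zero_of_supersolution (hΩ : IsOpen Ω) (hΩc : IsPreconnected Ω) (hA : ContinuousOn A Ω)
    (hApos : ∀ x ∈ Ω, (A x).PosDef) (hw : ContDiffOn ℝ 2 w Ω) (hw₀ : ∀ x ∈ Ω, 0 ≤ w x)
    (hsuper : ∀ y ∈ Ω, w y = 0 →
      ∃ C, ∀ᶠ x in 𝓝 y, (A x * hessMatrix w x).trace ≤ C * ‖grad w x‖)
    (hx₀ : x₀ ∈ Ω) (hwx₀ : w x₀ = 0) : ∀ x ∈ Ω, w x = 0 := by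
  have hlocal : ∀ x ∈ Ω, w x = 0 → x ∈ interior (w ⁻¹' {0}) := fun x hx hwx ↦
    mem_interior_iff_mem_nhds.mpr
      (eventually_eq_zero_of_supersolution hΩ hA hApos hw hw₀ hsuper hx hwx)
  have hinterior : interior (w ⁻¹' {0}) ⊆ w ⁻¹' {0} := interior_subset
  have hΩ_subset : Ω ⊆ interior (w ⁻¹' {0}) := by
    refine hΩc.subset_left_of_subset_union (v := Ω ∩ w ⁻¹' {0}ᶜ) isOpen_interior
      (hw.continuousOn.isOpen_inter_preimage hΩ isOpen_compl_singleton) ?_ (fun x hx ↦ ?_)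
      ⟨x₀, hx₀, hlocal x₀ hx₀ hwx₀⟩
    · exact disjoint_left.mpr fun x hx hx' ↦ hx'.2 (hinterior hx)
    · exact (em (w x = 0)).imp (hlocal x hx) fun hwx ↦ ⟨hx, hwx⟩
  exact fun x hx ↦ hinterior (hΩ_subset hx)

end LinearStrongMinimum

section Quasilinear

variable {n : ℕ} {a : (Fin n → ℝ) → Matrix (Fin n) (Fin n) ℝ}

/-- The quasilinear operator `∑ᵢⱼ aᵢⱼ(Du) Dᵢⱼu`, whose coefficients depend on the gradient only. -/
noncomputable def quasilinearOp (a : (Fin n → ℝ) → Matrix (Fin n) (Fin n) ℝ)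
    (u : (Fin n → ℝ) → ℝ) (x : Fin n → ℝ) : ℝ :=
  (a (grad u x) * hessMatrix u x).trace

lemma isBigO_trace_sub_mul {X : Type*} [TopologicalSpace X] {p q : X → Fin n → ℝ}
    {H : X → Matrix (Fin n) (Fin n) ℝ} {y : X} (ha : ∀ i j, LocallyLipschitz fun v ↦ a v i j)
    (hp : ContinuousAt p y) (hq : ContinuousAt q y) (hpq : p y = q y) (hH : ContinuousAt H y) :
    (fun x ↦ ((a (p x) - a (q x)) * H x).trace) =O[𝓝 y] fun x ↦ p x - q x := by
  have hentry (i j : Fin n) :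
      (fun x ↦ a (p x) i j - a (q x) i j) =O[𝓝 y] fun x ↦ p x - q x := by
    obtain ⟨L, V, hV, hLip⟩ := ha i j (p y)
    refine .of_bound L ?_
    filter_upwards [hp hV, hq (hpq ▸ hV)] with x hpx hqx
    simpa only [dist_eq_norm] using hLip.dist_le_mul _ hpx _ hqx
  have hH_bdd (i j : Fin n) : (fun x ↦ H x i j) =O[𝓝 y] fun _ ↦ (1 : ℝ) :=
    (((continuous_apply_apply i j).continuousAt.comp hH).tendsto).isBigO_one ℝ
  simp only [Matrix.trace, Matrix.diag, Matrix.mul_apply, Matrix.sub_apply]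
  refine IsBigO.fun_sum fun i _ ↦ IsBigO.fun_sum fun j _ ↦ ?_
  simpa using (hentry i j).norm_right.mul (hH_bdd j i)

variable {Ω : Set (Fin n → ℝ)} {u₁ u₂ : (Fin n → ℝ) → ℝ} {x₀ : Fin n → ℝ}

lemma trace_mul_hessMatrix_sub_le {x : Fin n → ℝ} (h₁ : ContDiffAt ℝ 2 u₁ x)
    (h₂ : ContDiffAt ℝ 2 u₂ x) (hQ : quasilinearOp a u₁ x ≤ quasilinearOp a u₂ x) :
    (a (grad u₁ x) * hessMatrix (u₁ - u₂) x).trace ≤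
      ((a (grad u₂ x) - a (grad u₁ x)) * hessMatrix u₂ x).trace := by
  rw [hessMatrix_sub h₁ h₂, mul_sub, sub_mul, trace_sub, trace_sub]
  exact sub_le_sub_right hQ _

-- Where the difference vanishes it is minimal, so the gradients agree there; the difference of the
-- coefficients is then controlled by the difference of the gradients.
lemma exists_eventually_trace_mul_hessMatrix_sub_le {y : Fin n → ℝ}
    (ha : ∀ i j, LocallyLipschitz fun p ↦ a p i j) (h₁ : ContDiffAt ℝ 2 u₁ y)
    (h₂ : ContDiffAt ℝ 2 u₂ y) (hQ : ∀ᶠ x in 𝓝 y, quasilinearOp a u₁ x ≤ quasilinearOp a u₂ x)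
    (hmin : IsLocalMin (u₁ - u₂) y) :
    ∃ C, ∀ᶠ x in 𝓝 y,
      (a (grad u₁ x) * hessMatrix (u₁ - u₂) x).trace ≤ C * ‖grad (u₁ - u₂) x‖ := by
  have hgrad : grad u₂ y = grad u₁ y := (grad_eq_of_isLocalMin_sub hmin
    (h₁.differentiableAt two_ne_zero) (h₂.differentiableAt two_ne_zero)).symm
  obtain ⟨C, hC⟩ := (isBigO_trace_sub_mul ha (continuousAt_grad (h₂.of_le one_le_two))
    (continuousAt_grad (h₁.of_le one_le_two)) hgrad (continuousAt_hessMatrix h₂)).bound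
  refine ⟨C, ?_⟩
  filter_upwards [hC, hQ, h₁.eventually (by simp), h₂.eventually (by simp)] with x hCx hQx h₁x h₂x
  rw [grad_sub (h₁x.differentiableAt two_ne_zero) (h₂x.differentiableAt two_ne_zero),
    norm_sub_rev]
  exact (trace_mul_hessMatrix_sub_le h₁x h₂x hQx).trans ((le_abs_self _).trans hCx)

theorem quasilinearOp_strong_comparison (ha : ∀ i j, LocallyLipschitz fun p ↦ a p i j)
    (hpos : ∀ p, (a p).PosDef) (hΩ : IsOpen Ω) (hΩc : IsPreconnected Ω)
    (h₁ : ContDiffOn ℝ 2 u₁ Ω) (h₂ : ContDiffOn ℝ 2 u₂ Ω)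
    (hQ : ∀ x ∈ Ω, quasilinearOp a u₁ x ≤ quasilinearOp a u₂ x) (hle : ∀ x ∈ Ω, u₂ x ≤ u₁ x)
    (hx₀ : x₀ ∈ Ω) (htouch : u₁ x₀ = u₂ x₀) : ∀ x ∈ Ω, u₁ x = u₂ x := by
  have ha_cont : Continuous a := continuous_pi fun i ↦ continuous_pi fun j ↦ (ha i j).continuous
  have hgrad : ContinuousOn (grad u₁) Ω := fun x hx ↦ (continuousAt_grad
    ((h₁.contDiffAt (hΩ.mem_nhds hx)).of_le one_le_two)).continuousWithinAt
  have hnonneg : ∀ x ∈ Ω, 0 ≤ (u₁ - u₂) x := fun x hx ↦ sub_nonneg.mpr (hle x hx)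
  have hzero := eq_zero_of_supersolution hΩ hΩc (ha_cont.comp_continuousOn hgrad)
    (fun x _ ↦ hpos _) (h₁.sub h₂) hnonneg (fun y hy hwy ↦ ?_) hx₀ (sub_eq_zero.mpr htouch)
  · exact fun x hx ↦ sub_eq_zero.mp (hzero x hx)
  · have hyΩ := hΩ.mem_nhds hy
    have hmin : IsLocalMin (u₁ - u₂) y :=
      mem_of_superset hyΩ fun x hx ↦ hwy.trans_le (hnonneg x hx)
    exact exists_eventually_trace_mul_hessMatrix_sub_le ha (h₁.contDiffAt hyΩ) (h₂.contDiffAt hyΩ)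
      (mem_of_superset hyΩ hQ) hmin

end Quasilinear

section MinimalSurface

variable {n : ℕ}

/-- The flux `p / √(1 + |p|²)`, whose divergence along `p = Du` is the minimal surface operator. -/
noncomputable def minSurfFlux (p : Fin n → ℝ) : Fin n → ℝ :=
  (√(1 + p ⬝ᵥ p))⁻¹ • p

/-- The coefficient matrix `(I - p pᵀ / (1 + |p|²)) / √(1 + |p|²)` of the minimal surface operator
in nondivergence form; it is the Jacobian of `minSurfFlux` at `p`. -/
noncomputable def minSurfCoeff (p : Fin n → ℝ) : Matrix (Fin n) (Fin n) ℝ :=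
  (√(1 + p ⬝ᵥ p))⁻¹ • (1 - (1 + p ⬝ᵥ p)⁻¹ • vecMulVec p p)

lemma one_add_dotProduct_self_pos (p : Fin n → ℝ) : 0 < 1 + p ⬝ᵥ p := by
  have h : 0 ≤ p ⬝ᵥ p := by simpa using dotProduct_star_self_nonneg p
  positivity

lemma minSurfCoeff_mulVec (p v : Fin n → ℝ) :
    minSurfCoeff p *ᵥ v = (√(1 + p ⬝ᵥ p))⁻¹ • (v - ((1 + p ⬝ᵥ p)⁻¹ * (p ⬝ᵥ v)) • p) := by
  rw [minSurfCoeff, smul_mulVec, sub_mulVec, one_mulVec, smul_mulVec, vecMulVec_mulVec,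
    op_smul_eq_smul, smul_smul]

lemma hasFDerivAt_minSurfFlux (p : Fin n → ℝ) :
    HasFDerivAt minSurfFlux (mulVecLin (minSurfCoeff p)).toContinuousLinearMap p := by
  have hpos := one_add_dotProduct_self_pos p
  have hnormalizer : HasFDerivAt (fun q : Fin n → ℝ ↦ (√(1 + q ⬝ᵥ q))⁻¹) _ p :=
    HasDerivAt.comp_hasFDerivAt (h₂ := fun s ↦ (√s)⁻¹) p
      ((Real.hasDerivAt_sqrt hpos.ne').fun_inv (Real.sqrt_pos.mpr hpos).ne')
      ((hasFDerivAt_dotProduct_self p).const_add 1)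
  refine (hnormalizer.fun_smul (hasFDerivAt_id p)).congr_fderiv ?_
  ext v i
  simp only [one_div, _root_.mul_inv_rev, Real.sq_sqrt hpos.le, id_eq, _root_.add_apply,
    _root_.smul_apply, ContinuousLinearMap.id_apply, ContinuousLinearMap.smulRight_apply,
    LinearMap.coe_toContinuousLinearMap', dotProductBilin_apply_apply, smul_eq_mul, Pi.add_apply,
    Pi.smul_apply, mulVecBilin_apply, minSurfCoeff_mulVec, Pi.sub_apply]
  field_simp
  ring

lemma minSurfOp_eq_quasilinearOp {u : (Fin n → ℝ) → ℝ} {x : Fin n → ℝ}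
    (hu : ContDiffAt ℝ 2 u x) : minSurfOp u x = quasilinearOp minSurfCoeff u x := by
  have hflux : HasFDerivAt (fun y ↦ minSurfFlux (grad u y)) _ x :=
    (hasFDerivAt_minSurfFlux (grad u x)).comp x (hasFDerivAt_grad hu)
  have hcomponent (i : Fin n) :
      (fun y ↦ pderiv' u i y / √(1 + ∑ j, pderiv' u j y ^ 2)) =
        fun y ↦ minSurfFlux (grad u y) i := by
    ext y
    simp [minSurfFlux, grad, dotProduct, sq, div_eq_inv_mul]
  simp only [minSurfOp, hcomponent, (hasFDerivAt_pi'.mp hflux _).fderiv, quasilinearOp]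
  exact Finset.sum_congr rfl fun i _ ↦ by simp [mul_apply, mulVec, dotProduct]

lemma sq_dotProduct_le (p v : Fin n → ℝ) : (p ⬝ᵥ v) ^ 2 ≤ (p ⬝ᵥ p) * (v ⬝ᵥ v) := by
  simpa [dotProduct, sq] using Finset.sum_mul_sq_le_sq_mul_sq Finset.univ p v

lemma posDef_minSurfCoeff (p : Fin n → ℝ) : (minSurfCoeff p).PosDef := by
  have hpos := one_add_dotProduct_self_pos p
  have hsqrt := Real.sqrt_pos.mpr hpos
  refine .of_dotProduct_mulVec_pos ?_ fun v hv ↦ ?_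
  · ext i j
    simp [minSurfCoeff, vecMulVec_apply, one_apply, eq_comm, mul_comm]
  · have hv_pos : 0 < v ⬝ᵥ v := by simpa using dotProduct_star_self_pos_iff.mpr hv
    have hcs : (p ⬝ᵥ v) ^ 2 < (1 + p ⬝ᵥ p) * (v ⬝ᵥ v) := by linarith [sq_dotProduct_le p v]
    have hquad : v ⬝ᵥ minSurfCoeff p *ᵥ v =
        (√(1 + p ⬝ᵥ p))⁻¹ * (v ⬝ᵥ v - (p ⬝ᵥ v) ^ 2 / (1 + p ⬝ᵥ p)) := by
      rw [minSurfCoeff_mulVec, dotProduct_smul, dotProduct_sub, dotProduct_smul,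
        dotProduct_comm v p]
      simp only [smul_eq_mul]
      ring
    rw [star_trivial, hquad]
    exact mul_pos (inv_pos.mpr hsqrt) (sub_pos.mpr ((div_lt_iff₀' hpos).mpr hcs))

lemma locallyLipschitz_minSurfCoeff (i j : Fin n) :
    LocallyLipschitz fun p : Fin n → ℝ ↦ minSurfCoeff p i j := by
  refine ContDiff.locallyLipschitz (𝕂 := ℝ) ?_
  have hsq : ContDiff ℝ 1 fun p : Fin n → ℝ ↦ 1 + p ⬝ᵥ p := by unfold dotProduct; fun_prop
  have hne (p : Fin n → ℝ) : 1 + p ⬝ᵥ p ≠ 0 := (one_add_dotProduct_self_pos p).ne'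
  have hsqrt_ne (p : Fin n → ℝ) : √(1 + p ⬝ᵥ p) ≠ 0 :=
    (Real.sqrt_pos.mpr (one_add_dotProduct_self_pos p)).ne'
  have hcoord (k : Fin n) : ContDiff ℝ 1 fun p : Fin n → ℝ ↦ p k := contDiff_apply ℝ ℝ k
  exact ((hsq.sqrt hne).inv hsqrt_ne).mul
    (contDiff_const.sub ((hsq.inv hne).mul ((hcoord i).mul (hcoord j))))

end MinimalSurface

/-- **Strong comparison principle for the minimal surface operator.**  On a
connected open set `Ω`, if `M(u₁) ≤ M(u₂)` and `u₂ ≤ u₁` in `Ω`, and the two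
functions touch at an interior point, then they coincide on all of `Ω`. -/
theorem minSurfOp_strong_comparison {n : ℕ} (Ω : Set (Fin n → ℝ))
    (hΩo : IsOpen Ω) (hΩc : IsConnected Ω)
    (u₁ u₂ : (Fin n → ℝ) → ℝ)
    (h₁ : ContDiffOn ℝ 2 u₁ Ω) (h₂ : ContDiffOn ℝ 2 u₂ Ω)
    (hM : ∀ x ∈ Ω, minSurfOp u₁ x ≤ minSurfOp u₂ x)
    (hle : ∀ x ∈ Ω, u₂ x ≤ u₁ x)
    (x₀ : Fin n → ℝ) (hx₀ : x₀ ∈ Ω) (htouch : u₁ x₀ = u₂ x₀) :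
    ∀ x ∈ Ω, u₁ x = u₂ x := by
  have hquasi : ∀ x ∈ Ω, quasilinearOp minSurfCoeff u₁ x ≤ quasilinearOp minSurfCoeff u₂ x :=
    fun x hx ↦ by
      rw [← minSurfOp_eq_quasilinearOp (h₁.contDiffAt (hΩo.mem_nhds hx)),
        ← minSurfOp_eq_quasilinearOp (h₂.contDiffAt (hΩo.mem_nhds hx))]
      exact hM x hx
  exact quasilinearOp_strong_comparison locallyLipschitz_minSurfCoeff posDef_minSurfCoeff hΩo
    hΩc.isPreconnected h₁ h₂ hquasi hle hx₀ htouch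
end

section
/- Achronality from exposed loci (abstract causal form): let M be a set equipped with a preorder ≤ (modeling the causal relation), let ι be an index type, and let S : ι → Set M be a family of subsets (the HRT surfaces). For indices i, j define the interaction region C(i,j) = { m ∈ M | (∃ a ∈ S i, a ≤ m) ∧ (∃ b ∈ S j, m ≤ b) } and the exposed region E(i,j) = C(i,j) \ ⋃_{(k,l) ≠ (i,j)} C(k,l), the union ranging over all ordered pairs (k,l) of indices different from (i,j). Then for any two distinct ordered pairs (i,j) ≠ (k,l), any p ∈ E(i,j) and any q ∈ E(k,l) are causally incomparable: neither p ≤ q nor q ≤ p holds. In particular, any choice of projection loci lying inside the exposed regions of distinct pairs is mutually achronal. -/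
/-- The interaction region of the ordered pair of sets `(S ij.1, S ij.2)`:
all points causally between a point of `S ij.1` and a point of `S ij.2`. -/
def interactionRegion {M : Type*} [Preorder M] {ι : Type*}
    (S : ι → Set M) (ij : ι × ι) : Set M :=
  {m | (∃ a ∈ S ij.1, a ≤ m) ∧ ∃ b ∈ S ij.2, m ≤ b}

/-- The exposed region of the pair `ij`: the part of its interaction region not
covered by the interaction region of any other ordered pair. -/
def exposedRegion {M : Type*} [Preorder M] {ι : Type*}
    (S : ι → Set M) (ij : ι × ι) : Set M :=
  interactionRegion S ij \ ⋃ kl ∈ {kl : ι × ι | kl ≠ ij}, interactionRegion S kl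

/- If `p ≤ q` with `p ∈ E(i,j)` and `q ∈ E(k,l)`, then both points lie in the mixed interaction
region `C(i,l)`: `p` is in the past of `S l` because `q` is, and `q` is in the future of `S i`
because `p` is. An exposed point lies in a single interaction region, so `(i,j) = (i,l) = (k,l)`. -/

section

variable {M : Type*} [Preorder M] {ι : Type*} {S : ι → Set M} {m p q : M}

theorem Icc_subset_interactionRegion {i j : ι} (hp : p ∈ upperClosure (S i))
    (hq : q ∈ lowerClosure (S j)) : Set.Icc p q ⊆ interactionRegion S (i, j) :=
  fun _ hm => ⟨(upperClosure (S i)).upper hm.1 hp, (lowerClosure (S j)).lower hm.2 hq⟩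

theorem mem_exposedRegion {ij : ι × ι} :
    m ∈ exposedRegion S ij ↔
      m ∈ interactionRegion S ij ∧ ∀ kl, m ∈ interactionRegion S kl → kl = ij := by
  simp only [exposedRegion, Set.mem_sdiff, Set.mem_iUnion₂, Set.mem_ofPred_eq, exists_prop,
    not_exists, not_and', not_not]

theorem eq_of_mem_exposedRegion_of_le {ij kl : ι × ι} (hp : p ∈ exposedRegion S ij)
    (hq : q ∈ exposedRegion S kl) (hpq : p ≤ q) : ij = kl := by
  obtain ⟨⟨hp_future, -⟩, hp_unique⟩ := mem_exposedRegion.mp hp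
  obtain ⟨⟨-, hq_past⟩, hq_unique⟩ := mem_exposedRegion.mp hq
  have h_Icc : Set.Icc p q ⊆ interactionRegion S (ij.1, kl.2) :=
    Icc_subset_interactionRegion hp_future hq_past
  calc
    ij = (ij.1, kl.2) := (hp_unique _ (h_Icc (Set.left_mem_Icc.mpr hpq))).symm
    _ = kl := hq_unique _ (h_Icc (Set.right_mem_Icc.mpr hpq))

end

/-- **Achronality from exposed loci.**  Points lying in the exposed regions of
two distinct ordered pairs are causally incomparable. -/
theorem exposed_loci_achronal {M : Type*} [Preorder M] {ι : Type*}
    (S : ι → Set M) (ij kl : ι × ι) (hne : ij ≠ kl)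
    (p q : M) (hp : p ∈ exposedRegion S ij) (hq : q ∈ exposedRegion S kl) :
    ¬ p ≤ q ∧ ¬ q ≤ p :=
  ⟨fun hpq => hne (eq_of_mem_exposedRegion_of_le hp hq hpq),
    fun hqp => hne (eq_of_mem_exposedRegion_of_le hq hp hqp).symm⟩
end
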